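/- Let p > n be a prime, α ≥ 1, and y = (y₁,...,y_n) ∈ (Z/p^αZ)^n. Suppose p^δ exactly divides ∏_{1≤j<k≤n} (y_j - y_k) with 2δ < α. Then the number of solutions x ∈ (Z/p^αZ)^n to the system Σ_i x_i^k ≡ Σ_i y_i^k mod p^α for k = 1,...,n is at most n!·p^δ. -/

import Mathlib

open Finset

namespace Hens

noncomputable def mpoly {R : Type*} [CommRing R] {n : ℕ} (x : Fin n → R) : Polynomial R :=
  ∏ i, (Polynomial.X - Polynomial.C (x i))

def DD {R : Type*} [CommRing R] {n : ℕ} (x : Fin n → R) : R :=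
  ∏ i, ∏ j ∈ Ioi i, (x i - x j)

section ring
variable {R : Type*} [CommRing R]

lemma DD_sq {n : ℕ} (x : Fin n → R) : DD x ^ 2 = (Matrix.vandermonde x).det ^ 2 := by
  rw [Matrix.det_vandermonde, DD]
  simp only [← Finset.prod_pow]
  refine Finset.prod_congr rfl fun i _ => Finset.prod_congr rfl fun j _ => by ring

lemma DD_cons {n : ℕ} (r : R) (x : Fin n → R) :
    DD (Fin.cons r x : Fin (n+1) → R) = (∏ j, (r - x j)) * DD x := by
  simp [DD, Fin.prod_univ_succ, Fin.prod_Ioi_succ]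

lemma mpoly_cons {n : ℕ} (r : R) (x : Fin n → R) :
    mpoly (Fin.cons r x : Fin (n+1) → R) = (Polynomial.X - Polynomial.C r) * mpoly x := by
  simp [mpoly, Fin.prod_univ_succ]

lemma mpoly_ms {n : ℕ} (x : Fin n → R) :
    mpoly x = ((univ.val.map x).map fun t => Polynomial.X - Polynomial.C t).prod := by
  rw [mpoly, Multiset.map_map]; rfl

lemma esymm_eq {n : ℕ} {x y : Fin n → R} (h : mpoly x = mpoly y) (k : ℕ) (hk : k ≤ n) :
    (univ.val.map x).esymm k = (univ.val.map y).esymm k := by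
  rw [mpoly_ms, mpoly_ms] at h
  have h2 := congrArg (fun f => Polynomial.coeff f (n - k)) h
  rw [Multiset.prod_X_sub_C_coeff _ (by simp), Multiset.prod_X_sub_C_coeff _ (by simp)] at h2
  simp only [Multiset.card_map, card_val, card_univ, Fintype.card_fin] at h2
  rw [Nat.sub_sub_self hk] at h2
  have hu : IsUnit ((-1 : R) ^ k) := (isUnit_one.neg).pow k
  exact hu.mul_left_cancel h2

lemma mpoly_of_esymm {n : ℕ} {x y : Fin n → R}
    (h : ∀ k ≤ n, (univ.val.map x).esymm k = (univ.val.map y).esymm k) : mpoly x = mpoly y := by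
  rw [mpoly_ms, mpoly_ms, Multiset.prod_X_sub_X_eq_sum_esymm, Multiset.prod_X_sub_X_eq_sum_esymm]
  simp only [Multiset.card_map, card_val, card_univ, Fintype.card_fin]
  refine Finset.sum_congr rfl fun j hj => ?_
  rw [h j (by simp at hj; omega)]

lemma mpoly_of_psum {n : ℕ} {x y : Fin n → R} (hu : ∀ k : ℕ, 1 ≤ k → k ≤ n → IsUnit (k : R))
    (h : ∀ k : ℕ, 1 ≤ k → k ≤ n → ∑ i, x i ^ k = ∑ i, y i ^ k) : mpoly x = mpoly y := by
  apply mpoly_of_esymm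
  intro k
  induction k using Nat.strong_induction_on with
  | _ k ih =>
  intro hk
  rcases Nat.eq_zero_or_pos k with rfl | hk0
  · simp [Multiset.esymm]
  have key : ∀ z : Fin n → R, (k : R) * (univ.val.map z).esymm k = (-1) ^ (k + 1) *
      ∑ a ∈ antidiagonal k with a.1 < k,
        (-1) ^ a.1 * (univ.val.map z).esymm a.1 * ∑ i, z i ^ a.2 := by
    intro z
    have := congrArg (MvPolynomial.aeval z) (MvPolynomial.mul_esymm_eq_sum (Fin n) R k)
    simpa only [map_mul, map_natCast, map_pow, map_neg, map_one, map_sum, MvPolynomial.psum,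
      MvPolynomial.aeval_X, MvPolynomial.aeval_esymm_eq_multiset_esymm] using this
  apply (hu k hk0 hk).mul_left_cancel
  rw [key x, key y]
  congr 1
  refine Finset.sum_congr rfl fun a ha => ?_
  simp only [mem_filter, HasAntidiagonal.mem_antidiagonal] at ha
  rw [ih a.1 ha.2 (by omega), h a.2 (by omega) (by omega)]

lemma DD_sq_eq {n : ℕ} {x y : Fin n → R} (h : mpoly x = mpoly y) : DD x ^ 2 = DD y ^ 2 := by
  rw [DD_sq, DD_sq]
  let P : MvPolynomial (Fin n) R := (Matrix.vandermonde (fun i => MvPolynomial.X i)).det ^ 2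
  have hev : ∀ z : Fin n → R, MvPolynomial.aeval z P = (Matrix.vandermonde z).det ^ 2 := by
    intro z
    simp [P, Matrix.det_vandermonde, map_prod]
  have hP : P.IsSymmetric := by
    intro σ
    have h1 : MvPolynomial.rename σ P =
        ((Matrix.vandermonde (fun i => (MvPolynomial.X i : MvPolynomial (Fin n) R))).submatrix σ id).det ^ 2 := by
      have : (Matrix.vandermonde (fun i => (MvPolynomial.X i : MvPolynomial (Fin n) R))).submatrix σ id
          = Matrix.vandermonde (fun i => MvPolynomial.X (σ i)) := by
        ext i j; simp [Matrix.vandermonde]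
      rw [this]
      simp [P, Matrix.det_vandermonde, map_prod]
    rw [h1, Matrix.det_permute, mul_pow]
    have : ((Equiv.Perm.sign σ : ℤ) : MvPolynomial (Fin n) R) ^ 2 = 1 := by
      rcases Int.units_eq_one_or (Equiv.Perm.sign σ) with h | h <;> simp [h]
    rw [this, one_mul]
  obtain ⟨Q, hQ⟩ := MvPolynomial.esymmAlgHom_surjective (σ := Fin n) R (n := n) (by simp) ⟨P, hP⟩
  have hQ2 : MvPolynomial.aeval (fun i : Fin n => MvPolynomial.esymm (Fin n) R (i + 1)) Q = P := by
    rw [← MvPolynomial.esymmAlgHom_apply, hQ]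
  have : ∀ z : Fin n → R, MvPolynomial.aeval z P =
      MvPolynomial.aeval (fun i : Fin n => (univ.val.map z).esymm (i + 1)) Q := by
    intro z
    rw [← hQ2, MvPolynomial.comp_aeval_apply]
    simp only [MvPolynomial.aeval_esymm_eq_multiset_esymm]
  rw [← hev, ← hev, this, this]
  have : (fun i : Fin n => (univ.val.map x).esymm (i + 1)) =
    (fun i : Fin n => (univ.val.map y).esymm (i + 1)) := by
    funext i
    exact esymm_eq h _ (by omega)
  rw [this]

lemma mpoly_succAbove {n : ℕ} (y : Fin (n+1) → R) (j : Fin (n+1)) :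
    mpoly (Fin.cons (y j) (fun i => y (j.succAbove i)) : Fin (n+1) → R) = mpoly y := by
  rw [mpoly_cons, mpoly, mpoly, Fin.prod_univ_succAbove _ j]

lemma mpoly_eval {n : ℕ} (y : Fin n → R) (r : R) : (mpoly y).eval r = ∏ i, (r - y i) := by
  simp [mpoly, Polynomial.eval_prod]

lemma deriv_cons {n : ℕ} (r : R) (x : Fin n → R) :
    (mpoly (Fin.cons r x : Fin (n+1) → R)).derivative.eval r = ∏ i, (r - x i) := by
  rw [mpoly_cons]
  simp [mpoly_eval]

lemma cancel {n : ℕ} (r : R) (x y : Fin n → R)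
    (h : mpoly (Fin.cons r x : Fin (n+1) → R) = mpoly (Fin.cons r y : Fin (n+1) → R)) :
    mpoly x = mpoly y := by
  rw [mpoly_cons, mpoly_cons] at h
  exact (Polynomial.monic_X_sub_C r).isRegular.left h

end ring

section zmod
variable {p α : ℕ}

lemma isUnit_cast (hp : p.Prime) {m : ℕ} (h : ¬ p ∣ m) : IsUnit (m : ZMod (p ^ α)) := by
  rw [ZMod.isUnit_iff_coprime]
  exact (((Nat.Prime.coprime_iff_not_dvd hp).2 h).symm).pow_right α

lemma rep (hp : p.Prime) (a : ZMod (p ^ α)) :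
    ∃ k u, IsUnit u ∧ a = u * (p : ZMod (p ^ α)) ^ k := by
  have : NeZero (p ^ α) := ⟨(pow_pos hp.pos α).ne'⟩
  by_cases ha : a = 0
  · refine ⟨α, 1, isUnit_one, ?_⟩
    rw [ha, one_mul, ← Nat.cast_pow, ZMod.natCast_self]
  · have : a.val ≠ 0 := by simpa [ZMod.val_eq_zero] using ha
    obtain ⟨k, m, hm, h⟩ := Nat.exists_eq_pow_mul_and_not_dvd this p hp.ne_one
    refine ⟨k, m, isUnit_cast hp hm, ?_⟩
    rw [← ZMod.natCast_zmod_val a, h]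
    push_cast
    ring

lemma pow_zero_iff (hp : p.Prime) (k : ℕ) : (p : ZMod (p ^ α)) ^ k = 0 ↔ α ≤ k := by
  rw [← Nat.cast_pow, ZMod.natCast_eq_zero_iff, Nat.pow_dvd_pow_iff_le_right hp.one_lt]

lemma rep_le (hp : p.Prime) {i j : ℕ} {u w : ZMod (p ^ α)} (hu : IsUnit u) (hi : i < α)
    (h : u * (p : ZMod (p ^ α)) ^ i = w * (p : ZMod (p ^ α)) ^ j) : j ≤ i := by
  by_contra hc
  have h2 : u * (p : ZMod (p ^ α)) ^ (α - 1) = 0 := by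
    have e : α - 1 = i + (α - 1 - i) := by omega
    rw [e, pow_add, ← mul_assoc, h, mul_assoc, ← pow_add, (pow_zero_iff hp _).2 (by omega), mul_zero]
  rw [hu.mul_right_eq_zero, pow_zero_iff hp] at h2
  omega

lemma rep_unique (hp : p.Prime) {i j : ℕ} {u w : ZMod (p ^ α)} (hu : IsUnit u) (hw : IsUnit w)
    (hi : i < α)
    (h : u * (p : ZMod (p ^ α)) ^ i = w * (p : ZMod (p ^ α)) ^ j) : i = j := by
  have := rep_le hp hu hi h
  have := rep_le hp hw (by omega) h.symm
  omega

lemma dvd_tot (hp : p.Prime) (a b : ZMod (p ^ α)) : a ∣ b ∨ b ∣ a := by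
  obtain ⟨i, u, hu, rfl⟩ := rep hp a
  obtain ⟨j, w, hw, rfl⟩ := rep hp b
  rcases le_total i j with h | h
  · left; rw [hu.mul_left_dvd]; exact (pow_dvd_pow _ h).mul_left _
  · right; rw [hw.mul_left_dvd]; exact (pow_dvd_pow _ h).mul_left _

lemma exists_max (hp : p.Prime) {n : ℕ} (z : Fin (n+1) → ZMod (p ^ α)) :
    ∃ j, ∀ i, z i ∣ z j := by
  induction n with
  | zero => exact ⟨0, fun i => by rw [show i = 0 from Fin.fin_one_eq_zero i]⟩
  | succ n ih =>
    obtain ⟨j, hj⟩ := ih (fun i => z i.succ)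
    rcases dvd_tot hp (z 0) (z j.succ) with h | h
    · exact ⟨j.succ, fun i => Fin.cases h hj i⟩
    · exact ⟨0, fun i => Fin.cases dvd_rfl (fun i => (hj i).trans h) i⟩

lemma root_loc (hp : p.Prime) {n : ℕ} (y : Fin (n+1) → ZMod (p ^ α)) (r : ZMod (p ^ α))
    (h : ∏ i, (r - y i) = 0) : ∃ j, (r - y j) * ∏ i, (y j - y (j.succAbove i)) = 0 := by
  obtain ⟨j, hj⟩ := exists_max hp (fun i => r - y i)
  refine ⟨j, ?_⟩
  rw [Fin.prod_univ_succAbove _ j] at h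
  rw [← zero_dvd_iff, ← h]
  refine mul_dvd_mul dvd_rfl (Finset.prod_dvd_prod_of_dvd _ _ fun i _ => ?_)
  have : y j - y (j.succAbove i) = (r - y (j.succAbove i)) - (r - y j) := by ring
  rw [this]
  exact dvd_sub dvd_rfl (hj _)

lemma ann_form (hp : p.Prime) {e : ℕ} (he : e ≤ α) (s : ZMod (p ^ α))
    (h : s * (p : ZMod (p ^ α)) ^ e = 0) :
    ∃ t < p ^ e, s = (p : ZMod (p ^ α)) ^ (α - e) * (t : ℕ) := by
  have : NeZero (p ^ α) := ⟨(pow_pos hp.pos α).ne'⟩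
  have hs := ZMod.natCast_zmod_val s
  have hlt := ZMod.val_lt s
  have ea : p ^ α = p ^ (α - e) * p ^ e := by rw [← pow_add]; congr 1; omega
  rw [← hs, ← Nat.cast_pow, ← Nat.cast_mul, ZMod.natCast_eq_zero_iff] at h
  have h3 : p ^ (α - e) ∣ s.val := by
    apply Nat.dvd_of_mul_dvd_mul_right (pow_pos hp.pos e)
    rw [← ea]; exact h
  obtain ⟨t, ht⟩ := h3
  refine ⟨t, ?_, ?_⟩
  · have : p ^ (α - e) * t < p ^ (α - e) * p ^ e := by rw [← ht, ← ea]; exact hlt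
    exact lt_of_mul_lt_mul_left this (Nat.zero_le _)
  · rw [← hs, ht]; push_cast; rfl

lemma ann_card [NeZero (p ^ α)] (hp : p.Prime) {e : ℕ} (he : e ≤ α) (c : ZMod (p ^ α)) :
    (univ.filter fun r : ZMod (p ^ α) => (r - c) * (p : ZMod (p ^ α)) ^ e = 0).card ≤ p ^ e := by
  calc _ ≤ ((range (p ^ e)).image
      (fun t : ℕ => c + (p : ZMod (p ^ α)) ^ (α - e) * (t : ZMod (p ^ α)))).card := by
        apply card_le_card
        intro r hr
        simp only [mem_filter, mem_univ, true_and] at hr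
        obtain ⟨t, ht, h⟩ := ann_form hp he _ hr
        simp only [mem_image, mem_range]
        exact ⟨t, ht, by rw [← h]; ring⟩
    _ ≤ _ := by simpa using card_image_le (s := range (p ^ e))

theorem main [NeZero (p ^ α)] (hp : p.Prime) (n : ℕ) : ∀ (y : Fin n → ZMod (p ^ α)) (δ : ℕ) (u : ZMod (p ^ α)),
    IsUnit u → DD y = u * (p : ZMod (p ^ α)) ^ δ → 2 * δ < α →
    Nat.card {x : Fin n → ZMod (p ^ α) // mpoly x = mpoly y} ≤ n.factorial * p ^ δ := by
  classical
  induction n with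
  | zero =>
    intro y δ u _ _ _
    have h1 : Nat.card {x : Fin 0 → ZMod (p ^ α) // mpoly x = mpoly y} ≤ 1 :=
      Finite.card_le_one_iff_subsingleton.2 inferInstance
    have := Nat.pow_pos (n := δ) hp.pos
    rw [Nat.factorial_zero, one_mul]; omega
  | succ n ih =>
    intro y δ u hu hD hδ
    set π : ZMod (p ^ α) := (p : ZMod (p ^ α)) with hπ
    have hD2 : DD y ^ 2 = u ^ 2 * π ^ (2 * δ) := by rw [hD]; ring
    -- local data at each index
    have hloc : ∀ j, ∃ e w, IsUnit w ∧ ∏ i, (y j - y (j.succAbove i)) = w * π ^ e ∧ e ≤ δ := by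
      intro j
      obtain ⟨e, w, hw, he⟩ := rep hp (∏ i, (y j - y (j.succAbove i)))
      obtain ⟨k, v, hv, hk⟩ := rep hp (DD fun i => y (j.succAbove i))
      refine ⟨e, w, hw, he, ?_⟩
      have h1 := DD_sq_eq (mpoly_succAbove y j)
      rw [DD_cons, he, hk, hD2] at h1
      have h2 : u ^ 2 * π ^ (2 * δ) = (w * v) ^ 2 * π ^ (2 * (e + k)) := by
        rw [← h1]; ring
      have := rep_unique hp (hu.pow 2) ((hw.mul hv).pow 2) hδ h2
      omega
    choose e w hw he hle using hloc
    let A : Fin (n+1) → Finset (ZMod (p ^ α)) := fun j =>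
      univ.filter fun r => (r - y j) * π ^ e j = 0
    let S : ZMod (p ^ α) → Finset (Fin (n+1) → ZMod (p ^ α)) := fun r =>
      univ.filter fun x => mpoly x = mpoly y ∧ x 0 = r
    have hS : ∀ j, ∀ r ∈ A j, (S r).card ≤ n.factorial * p ^ (δ - e j) := by
      intro j r hr
      rcases (S r).eq_empty_or_nonempty with h0 | ⟨x, hx⟩
      · rw [h0]; simp
      simp only [S, mem_filter, mem_univ, true_and] at hx
      obtain ⟨hx, hx0⟩ := hx
      have hxc : x = Fin.cons r (Fin.tail x) := by rw [← hx0, Fin.cons_self_tail]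
      -- derivative at r
      have hder : ∃ v, IsUnit v ∧ ∏ i, (r - Fin.tail x i) = v * π ^ e j := by
        have d1 := deriv_cons r (Fin.tail x)
        rw [← hxc, hx] at d1
        have d2 := deriv_cons (y j) (fun i => y (j.succAbove i))
        rw [mpoly_succAbove, he] at d2
        obtain ⟨c, hc⟩ := Polynomial.sub_dvd_eval_sub r (y j) (mpoly y).derivative
        simp only [A, mem_filter, mem_univ, true_and] at hr
        obtain ⟨t, -, ht⟩ := ann_form hp (by have := hle j; omega) _ hr
        rw [d1, d2, ht] at hc
        have e1 : α - e j = e j + 1 + (α - e j - e j - 1) := by have := hle j; omega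
        refine ⟨w j + π * (π ^ (α - e j - e j - 1) * t * c), ?_, ?_⟩
        · apply IsNilpotent.isUnit_add_left_of_commute _ (hw j) (Commute.all _ _)
          exact (Commute.all _ _).isNilpotent_mul_right ⟨α, (pow_zero_iff hp α).2 le_rfl⟩
        · rw [e1, ← hπ] at hc
          linear_combination hc
      obtain ⟨v, hv, hvv⟩ := hder
      obtain ⟨k, v', hv', hk⟩ := rep hp (DD (Fin.tail x))
      have h1 := DD_sq_eq hx
      rw [hxc, DD_cons, hvv, hk, hD2] at h1
      have h2 : u ^ 2 * π ^ (2 * δ) = (v * v') ^ 2 * π ^ (2 * (e j + k)) := by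
        rw [← h1]; ring
      have hke := rep_unique hp (hu.pow 2) ((hv.mul hv').pow 2) hδ h2
      have hk' : k = δ - e j := by omega
      have := ih (Fin.tail x) k v' hv' hk (by omega)
      rw [← hk']
      refine le_trans ?_ this
      rw [Nat.card_eq_fintype_card, Fintype.card_subtype]
      apply card_le_card_of_injOn Fin.tail
      · intro z hz
        simp only [S, coe_filter, mem_univ, true_and, Set.mem_ofPred_eq] at hz ⊢
        apply cancel r
        rw [← hxc, hx, ← hz.1, ← hz.2, Fin.cons_self_tail]
      · intro z hz z' hz' hh
        simp only [S, coe_filter, mem_univ, true_and, Set.mem_ofPred_eq] at hz hz'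
        rw [← Fin.cons_self_tail z, ← Fin.cons_self_tail z', hz.2, hz'.2, hh]
    rw [Nat.card_eq_fintype_card, Fintype.card_subtype]
    calc _ ≤ (univ.biUnion fun j => (A j).biUnion S).card := by
          apply card_le_card
          intro x hx
          simp only [mem_filter, mem_univ, true_and] at hx
          have h0 : ∏ i, (x 0 - y i) = 0 := by
            rw [← mpoly_eval, ← hx, mpoly_eval]
            exact prod_eq_zero (mem_univ 0) (sub_self _)
          obtain ⟨j, hj⟩ := root_loc hp y _ h0
          rw [he, mul_left_comm, (hw j).mul_right_eq_zero] at hj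
          simp only [mem_biUnion, mem_univ, true_and]
          exact ⟨j, x 0, by simpa [A] using hj, by simp [S, hx]⟩
      _ ≤ ∑ j, ((A j).biUnion S).card := card_biUnion_le
      _ ≤ ∑ j : Fin (n+1), n.factorial * p ^ δ := by
          refine sum_le_sum fun j _ => ?_
          calc _ ≤ (A j).card * (n.factorial * p ^ (δ - e j)) := card_biUnion_le_card_mul _ _ _ (hS j)
            _ ≤ p ^ e j * (n.factorial * p ^ (δ - e j)) :=
                Nat.mul_le_mul_right _ (ann_card hp (by have := hle j; omega) _)
            _ = n.factorial * (p ^ e j * p ^ (δ - e j)) := by ring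
            _ = _ := by rw [← pow_add, Nat.add_sub_cancel' (hle j)]
      _ = _ := by simp [Nat.factorial_succ]; ring

end zmod
end Hens

theorem stmt_18 (p n α δ : ℕ) (hp : p.Prime) (hpn : n < p) (hα : 1 ≤ α)
    (y : Fin n → ZMod (p ^ α)) (hδ : 2 * δ < α)
    (hdvd : p ^ δ ∣
      ((∏ q ∈ Finset.univ.filter fun q : Fin n × Fin n => q.1 < q.2,
        (y q.1 - y q.2)).val))
    (hndvd : ¬ p ^ (δ + 1) ∣
      ((∏ q ∈ Finset.univ.filter fun q : Fin n × Fin n => q.1 < q.2,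
        (y q.1 - y q.2)).val)) :
    Nat.card {x : Fin n → ZMod (p ^ α) //
        ∀ k : ℕ, 1 ≤ k → k ≤ n → ∑ i, (x i) ^ k = ∑ i, (y i) ^ k}
      ≤ n.factorial * p ^ δ := by
  have : NeZero (p ^ α) := ⟨(pow_pos hp.pos α).ne'⟩
  have hDD : (∏ q ∈ Finset.univ.filter fun q : Fin n × Fin n => q.1 < q.2,
        (y q.1 - y q.2)) = Hens.DD y := by
    rw [Hens.DD, Finset.prod_sigma']
    refine Finset.prod_bij' (fun q _ => ⟨q.1, q.2⟩) (fun q _ => (q.1, q.2)) ?_ ?_ ?_ ?_ ?_ <;> simp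
  rw [hDD] at hdvd hndvd
  obtain ⟨m, hm⟩ := hdvd
  have hpm : ¬ p ∣ m := by
    rintro ⟨c, rfl⟩
    exact hndvd ⟨c, by rw [hm]; ring⟩
  have key := Hens.main hp n y δ (m : ZMod (p ^ α)) (Hens.isUnit_cast hp hpm)
    (by rw [← ZMod.natCast_zmod_val (Hens.DD y), hm]; push_cast; ring) hδ
  refine le_trans ?_ key
  refine Nat.card_le_card_of_injective
    (Subtype.map id fun x hx => Hens.mpoly_of_psum (fun k h1 h2 => ?_) hx)
    (Subtype.map_injective _ Function.injective_id)
  exact Hens.isUnit_cast hp (fun h => by have := Nat.le_of_dvd (by omega) h; omega)
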